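/- Let (E, τ) be a uniquely generated violator space: E is a finite set, τ : 2^E → 2^E satisfies C1 (X ⊆ τ(X) for all X ⊆ E) and C22 (F ⊆ G ⊆ τ(F) implies τ(G) = τ(F)), and every X ⊆ E has a unique basis. Then for every A ⊆ E, the equivalence class [A] = {X ⊆ E : τ(X) = τ(A)} equals the interval [B_A, τ(A)] = {C ⊆ E : B_A ⊆ C ⊆ τ(A)}, where B_A is the unique basis of A. Consequently the equivalence classes of the relation τ(X) = τ(Y) form a partition of the power set of E into intervals (a hypercube partition). -/

import Mathlib

/-- `B` is a basis of `X` w.r.t. `τ`: a generator of `X` minimal under inclusion. -/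
def IsBasis {α : Type*} (τ : Finset α → Finset α) (X B : Finset α) : Prop :=
  τ B = τ X ∧ ∀ B' : Finset α, τ B' = τ X → B' ⊆ B → B' = B

/-!
Bases are the minimal elements of a fiber of `τ`. In a well-founded order every element of the
fiber lies above a minimal one, so a unique minimal element is the least element of the fiber; by C1
the common value of `τ` is an upper bound, and by C22 everything in between stays in the fiber.
-/

theorem isBasis_iff_minimal {α : Type*} {τ : Finset α → Finset α} {X B : Finset α} :
    IsBasis τ X B ↔ Minimal (fun C ↦ τ C = τ X) B := by
  simp only [IsBasis, minimal_iff, eq_comm (b := B)]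

section Preorder

variable {P : Type*} [Preorder P]

theorem le_of_subsingleton_minimal [WellFoundedLT P] {p : P → Prop} {b x : P}
    (hb : Minimal p b) (hunique : {m | Minimal p m}.Subsingleton) (hx : p x) : b ≤ x := by
  obtain ⟨m, hmx, hm⟩ := exists_minimal_le_of_wellFoundedLT p x hx
  rwa [hunique hb hm]

theorem apply_eq_of_mem_Icc {τ : P → P} (hC22 : ∀ x y, x ≤ y → y ≤ τ x → τ y = τ x)
    {a b x : P} (hb : τ b = τ a) (hx : x ∈ Set.Icc b (τ a)) : τ x = τ a :=
  calc
    τ x = τ b := hC22 b x hx.1 (hx.2.trans_eq hb.symm)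
    _ = τ a := hb

theorem class_eq_interval_general [WellFoundedLT P] (τ : P → P) (hC1 : ∀ x, x ≤ τ x)
    (hC22 : ∀ x y, x ≤ y → y ≤ τ x → τ y = τ x) {a b : P}
    (hb : Minimal (fun x ↦ τ x = τ a) b)
    (hunique : {m | Minimal (fun x ↦ τ x = τ a) m}.Subsingleton) :
    {x | τ x = τ a} = Set.Icc b (τ a) := by
  apply Set.Subset.antisymm
  · intro x hx
    exact ⟨le_of_subsingleton_minimal hb hunique hx, (hC1 x).trans_eq hx⟩
  · intro x hx
    exact apply_eq_of_mem_Icc hC22 hb.prop hx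

end Preorder

/-- In a uniquely generated violator space (C1 + C22), the equivalence
class [A] = {X : τ(X) = τ(A)} equals the interval [B_A, τ(A)], where B_A is the
unique basis of A; hence the classes partition the power set into intervals. -/
theorem class_eq_interval {α : Type*} [Fintype α] [DecidableEq α]
    (τ : Finset α → Finset α)
    (hC1 : ∀ X : Finset α, X ⊆ τ X)
    (hC22 : ∀ F G : Finset α, F ⊆ G → G ⊆ τ F → τ G = τ F)
    (hUG : ∀ X : Finset α, ∃! B : Finset α, IsBasis τ X B) :
    ∀ A B_A : Finset α, IsBasis τ A B_A →
      {X : Finset α | τ X = τ A} = {C : Finset α | B_A ⊆ C ∧ C ⊆ τ A} := by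
  simp only [isBasis_iff_minimal] at hUG ⊢
  exact fun A _ hB ↦ class_eq_interval_general τ hC1 hC22 hB fun _ h _ h' ↦ (hUG A).unique h h'
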